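/- Let U ⊆ ℝⁿ be open, let p ∈ U, and let E_1, …, E_n : U → ℝⁿ be C¹ vector fields such that (E_1(x), …, E_n(x)) is a basis of ℝⁿ for every x ∈ U and such that all pairwise Lie brackets vanish: [E_i, E_j](x) = 0 for all x ∈ U and all i, j. Then there exist an open neighborhood V ⊆ U of p, an open set W ⊆ ℝⁿ, and a C² map φ : V → ℝⁿ that is a bijection from V onto W with C² inverse, such that Dφ(x)(E_j(x)) = e_j for every x ∈ V and every j, where e_j denotes the j-th standard basis vector of ℝⁿ and Dφ(x) is the Fréchet derivative of φ at x. -/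

import Mathlib

open scoped BigOperators

/-!
The dual coframe of a commuting frame is closed, hence locally exact. Let `A x` be the linear map
sending `e_j` to `E_j x`, and let `ω x = (A x)⁻¹`, an `ℝⁿ`-valued 1-form of class `C¹` with
`ω(E_j) = e_j`. Differentiating this identity in the direction `E_i` gives
`(Dω · E_i) E_j = -ω (DE_j · E_i)`, which is symmetric in `i, j` because the brackets vanish; since
the `E_j` span, `Dω` is symmetric (`fderiv_coframe_symm`). By the Poincaré lemma, `ω = Dφ` on a
ball around `p`. Then `φ` is `C²` because `Dφ = ω` is `C¹`, and the inverse function theorem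
supplies the `C²` local inverse. No flows are needed, which is why `C¹` regularity suffices.
-/

/-- The linear map `ℝⁿ → ℝⁿ` whose `j`-th column is the vector `E j x`. -/
noncomputable def frameMap {n : ℕ} (E : Fin n → (Fin n → ℝ) → (Fin n → ℝ)) (x : Fin n → ℝ) :
    (Fin n → ℝ) →L[ℝ] (Fin n → ℝ) :=
  ∑ j, (ContinuousLinearMap.proj (R := ℝ) (φ := fun _ : Fin n => ℝ) j).smulRight (E j x)

/-- The coframe dual to `E`, as a vector-valued 1-form. It is the inverse of `frameMap E x`, with
junk value `0` where the vectors `E j x` do not form a basis. -/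
noncomputable def coframe {n : ℕ} (E : Fin n → (Fin n → ℝ) → (Fin n → ℝ)) (x : Fin n → ℝ) :
    (Fin n → ℝ) →L[ℝ] (Fin n → ℝ) :=
  (frameMap E x).inverse

lemma frameMap_single {n : ℕ} (E : Fin n → (Fin n → ℝ) → (Fin n → ℝ)) (x : Fin n → ℝ)
    (j : Fin n) : frameMap E x (Pi.single j 1) = E j x := by
  simp [frameMap, Pi.single_apply]

lemma contDiffAt_frameMap {n : ℕ} {E : Fin n → (Fin n → ℝ) → (Fin n → ℝ)} {x : Fin n → ℝ}
    (hE : ∀ j, ContDiffAt ℝ 1 (E j) x) : ContDiffAt ℝ 1 (frameMap E) x := by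
  unfold frameMap
  exact ContDiffAt.sum fun j _ => contDiffAt_const.smulRight (hE j)

lemma exists_equiv_frameMap {n : ℕ} {E : Fin n → (Fin n → ℝ) → (Fin n → ℝ)} {x : Fin n → ℝ}
    (hx : Submodule.span ℝ (Set.range fun j => E j x) = ⊤) :
    ∃ e : (Fin n → ℝ) ≃L[ℝ] (Fin n → ℝ), (e : (Fin n → ℝ) →L[ℝ] (Fin n → ℝ)) = frameMap E x := by
  have hsurj : Function.Surjective (frameMap E x : (Fin n → ℝ) →ₗ[ℝ] (Fin n → ℝ)) := by
    rw [← LinearMap.range_eq_top, eq_top_iff, ← hx, Submodule.span_le]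
    rintro _ ⟨j, rfl⟩
    exact ⟨Pi.single j 1, frameMap_single E x j⟩
  have hinj := LinearMap.injective_iff_surjective.2 hsurj
  refine ⟨(LinearEquiv.ofBijective _ ⟨hinj, hsurj⟩).toContinuousLinearEquiv, ?_⟩
  ext1 v
  rfl

lemma exists_equiv_coframe {n : ℕ} {E : Fin n → (Fin n → ℝ) → (Fin n → ℝ)} {x : Fin n → ℝ}
    (hx : Submodule.span ℝ (Set.range fun j => E j x) = ⊤) :
    ∃ e : (Fin n → ℝ) ≃L[ℝ] (Fin n → ℝ), (e : (Fin n → ℝ) →L[ℝ] (Fin n → ℝ)) = coframe E x := by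
  obtain ⟨e, he⟩ := exists_equiv_frameMap hx
  exact ⟨e.symm, by rw [coframe, ← he, ContinuousLinearMap.inverse_equiv]⟩

lemma coframe_apply {n : ℕ} {E : Fin n → (Fin n → ℝ) → (Fin n → ℝ)} {x : Fin n → ℝ}
    (hx : Submodule.span ℝ (Set.range fun j => E j x) = ⊤) (j : Fin n) :
    coframe E x (E j x) = Pi.single j 1 := by
  obtain ⟨e, he⟩ := exists_equiv_frameMap hx
  rw [← frameMap_single E x j, coframe, ← he, ContinuousLinearMap.inverse_equiv]
  simp

lemma contDiffAt_coframe {n : ℕ} {E : Fin n → (Fin n → ℝ) → (Fin n → ℝ)} {x : Fin n → ℝ}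
    (hE : ∀ j, ContDiffAt ℝ 1 (E j) x)
    (hx : Submodule.span ℝ (Set.range fun j => E j x) = ⊤) :
    ContDiffAt ℝ 1 (coframe E) x := by
  obtain ⟨e, he⟩ := exists_equiv_frameMap hx
  have h := contDiffAt_map_inverse (𝕜 := ℝ) (n := 1) e
  rw [he] at h
  exact h.comp x (contDiffAt_frameMap hE)

/-- The coframe dual to a commuting frame is closed: this is `dω(E_i, E_j) = -ω([E_i, E_j]) = 0`,
as `ω(E_j)` is constant. -/
lemma fderiv_coframe_symm {n : ℕ} {U : Set (Fin n → ℝ)} (hU : IsOpen U)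
    {E : Fin n → (Fin n → ℝ) → (Fin n → ℝ)} (hE : ∀ j, ContDiffOn ℝ 1 (E j) U)
    (hspan : ∀ x ∈ U, Submodule.span ℝ (Set.range fun j => E j x) = ⊤)
    (hcomm : ∀ x ∈ U, ∀ i j, fderiv ℝ (E j) x (E i x) - fderiv ℝ (E i) x (E j x) = 0)
    {x : Fin n → ℝ} (hx : x ∈ U) (v w : Fin n → ℝ) :
    fderiv ℝ (coframe E) x v w = fderiv ℝ (coframe E) x w v := by
  have hEx : ∀ j, ContDiffAt ℝ 1 (E j) x := fun j => (hE j).contDiffAt (hU.mem_nhds hx)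
  have hω : HasFDerivAt (coframe E) (fderiv ℝ (coframe E) x) x :=
    ((contDiffAt_coframe hEx (hspan x hx)).differentiableAt one_ne_zero).hasFDerivAt
  have hleib : ∀ j v, fderiv ℝ (coframe E) x v (E j x) = -coframe E x (fderiv ℝ (E j) x v) := by
    intro j v
    have h1 := hω.clm_apply ((hEx j).differentiableAt one_ne_zero).hasFDerivAt
    have h2 : HasFDerivAt (𝕜 := ℝ) (fun y => coframe E y (E j y)) 0 x :=
      (hasFDerivAt_const (Pi.single j (1 : ℝ) : Fin n → ℝ) x).congr_of_eventuallyEq <|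
        Filter.mem_of_superset (hU.mem_nhds hx) fun y hy => coframe_apply (hspan y hy) j
    have h3 := DFunLike.congr_fun (h1.unique h2) v
    simp only [add_apply, ContinuousLinearMap.comp_apply,
      ContinuousLinearMap.flip_apply, zero_apply] at h3
    exact eq_neg_of_add_eq_zero_right h3
  have hsymm : ∀ i j, fderiv ℝ (coframe E) x (E i x) (E j x)
      = fderiv ℝ (coframe E) x (E j x) (E i x) := fun i j => by
    rw [hleib, hleib, sub_eq_zero.1 (hcomm x hx i j)]
  have hflip : ∀ i, fderiv ℝ (coframe E) x (E i x) = (fderiv ℝ (coframe E) x).flip (E i x) :=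
    fun i => ContinuousLinearMap.coe_injective <|
      LinearMap.ext_on_range (hspan x hx) fun j => hsymm i j
  have hall : fderiv ℝ (coframe E) x v = (fderiv ℝ (coframe E) x).flip v :=
    ContinuousLinearMap.coe_injective <|
      LinearMap.ext_on_range (hspan x hx) fun i => (DFunLike.congr_fun (hflip i) v).symm
  exact DFunLike.congr_fun hall w

/-- **Coordinates from commuting `C¹` vector fields.**
Let `U ⊆ ℝⁿ` be open, `p ∈ U`, and let `E 1, …, E n : U → ℝⁿ` be `C¹` vector
fields forming a basis of `ℝⁿ` at every point of `U`, with all pairwise Lie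
brackets `[E i, E j](x) = DE_j(x)(E_i(x)) − DE_i(x)(E_j(x))` vanishing on `U`.
Then near `p` there is a `C²` coordinate system `φ` (a bijection onto an open
set with `C²` inverse) with `Dφ(x)(E_j(x)) = e_j`, i.e. straightening the
frame to the standard coordinate vector fields. -/
theorem straighten_commuting_frame {n : ℕ} {U : Set (Fin n → ℝ)}
    (hU : IsOpen U) {p : Fin n → ℝ} (hp : p ∈ U)
    (E : Fin n → (Fin n → ℝ) → (Fin n → ℝ))
    (hE : ∀ j, ContDiffOn ℝ 1 (E j) U)
    (hbasis : ∀ x ∈ U,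
      LinearIndependent ℝ (fun j => E j x) ∧
        Submodule.span ℝ (Set.range fun j => E j x) = ⊤)
    (hcomm : ∀ x ∈ U, ∀ i j,
      fderiv ℝ (E j) x (E i x) - fderiv ℝ (E i) x (E j x) = 0) :
    ∃ (V W : Set (Fin n → ℝ)) (φ ψ : (Fin n → ℝ) → (Fin n → ℝ)),
      IsOpen V ∧ p ∈ V ∧ V ⊆ U ∧ IsOpen W ∧
      ContDiffOn ℝ 2 φ V ∧ ContDiffOn ℝ 2 ψ W ∧
      Set.BijOn φ V W ∧
      (∀ x ∈ V, ψ (φ x) = x) ∧ (∀ y ∈ W, φ (ψ y) = y) ∧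
      (∀ x ∈ V, ∀ j, fderiv ℝ φ x (E j x) = Pi.single j 1) := by
  have hspan := fun x hx => (hbasis x hx).2
  obtain ⟨r, hr, hball⟩ := Metric.isOpen_iff.1 hU p hp
  have hBo : IsOpen (Metric.ball p r) := Metric.isOpen_ball
  have hpB : p ∈ Metric.ball p r := Metric.mem_ball_self hr
  have hωC : ContDiffOn ℝ 1 (coframe E) (Metric.ball p r) := fun x hx =>
    (contDiffAt_coframe (fun j => (hE j).contDiffAt (hU.mem_nhds (hball hx)))
      (hspan x (hball hx))).contDiffWithinAt
  obtain ⟨φ, hφ⟩ := (convex_ball p r).exists_forall_hasFDerivAt_of_fderiv_symmetric hBo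
    (hωC.differentiableOn one_ne_zero)
    fun x hx v w => fderiv_coframe_symm hU hE hspan hcomm (hball hx) v w
  have hφC : ContDiffOn ℝ 2 φ (Metric.ball p r) := by
    rw [← one_add_one_eq_two, contDiffOn_succ_iff_fderiv_of_isOpen hBo]
    exact ⟨fun x hx => (hφ x hx).differentiableAt.differentiableWithinAt, by simp,
      hωC.congr fun x hx => (hφ x hx).fderiv⟩
  have hφCAt : ∀ x ∈ Metric.ball p r, ContDiffAt ℝ 2 φ x :=
    fun x hx => hφC.contDiffAt (hBo.mem_nhds hx)
  have hφ' : ∀ x ∈ Metric.ball p r, ∃ e : (Fin n → ℝ) ≃L[ℝ] (Fin n → ℝ),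
      HasFDerivAt φ (e : (Fin n → ℝ) →L[ℝ] (Fin n → ℝ)) x := fun x hx => by
    obtain ⟨e, he⟩ := exists_equiv_coframe (hspan x (hball hx))
    exact ⟨e, he ▸ hφ x hx⟩
  obtain ⟨e, he⟩ := hφ' p hpB
  -- The inverse function theorem does not control the source of the chart, so it is cut down to
  -- the ball, where `φ` is known to be a primitive of the coframe.
  let Φ := ((hφCAt p hpB).toOpenPartialHomeomorph φ he two_ne_zero).restrOpen _ hBo
  have hΦ : (Φ : (Fin n → ℝ) → (Fin n → ℝ)) = φ := rfl
  have hsrc : ∀ x ∈ Φ.source, x ∈ Metric.ball p r := fun x hx => hx.2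
  refine ⟨Φ.source, Φ.target, φ, Φ.symm, Φ.open_source,
    ⟨(hφCAt p hpB).mem_toOpenPartialHomeomorph_source he two_ne_zero, hpB⟩,
    fun x hx => hball (hsrc x hx), Φ.open_target, hφC.mono hsrc, ?_, Φ.bijOn,
    fun x hx => Φ.left_inv hx, fun y hy => Φ.right_inv hy, fun x hx j => ?_⟩
  · intro y hy
    have hyB := hsrc _ (Φ.map_target hy)
    obtain ⟨e', he'⟩ := hφ' _ hyB
    exact (Φ.contDiffAt_symm hy he' (hφCAt _ hyB)).contDiffWithinAt
  · rw [(hφ x (hsrc x hx)).fderiv, coframe_apply (hspan x (hball (hsrc x hx)))]
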